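/- Let Π₀,…,Π_d be pairwise orthogonal orthogonal-projection matrices on ℂ^N with Π₀+⋯+Π_d = I, let H₁ be Hermitian, let Π₀^⊥ = I − Π₀ and r = rank(Π₀), and set A := Π₀^⊥ H₁ Π₀^⊥, B := Π₀^⊥ H₁ Π₀. Suppose there exists n ∈ ℕ such that rank[B, AB, …, AⁿB] ≥ N − r. Then condition A6 holds: for every j ∈ {1,…,d}, every λ ∈ ℂ, and every vector v in the range of Π_j satisfying Π_j H₁ Π_j v = λ v and Π_i H₁ Π_j v = 0 for all i ≠ j, one has v = 0. -/

import Mathlib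

open Matrix

/-!
A vector `v` as in A6 is an eigenvector of `H₁` with `P 0 *ᵥ v = 0`. Since `H₁` and `P 0` are
Hermitian, `w = star v` is a left eigenvector of `H₁` with `w ᵥ* P 0 = 0`, hence a left eigenvector
of `A` annihilated by `B`, and so it annihilates the whole block matrix `[B, AB, …, AⁿB]`. The rows
of `P 0` annihilate this matrix too, and by the rank condition they span its left kernel. Hence
`w = u ᵥ* P 0` for some `u`, and idempotence gives `w = w ᵥ* P 0 = 0`.
-/

section LinearAlgebra

variable {l m n K : Type*} [Fintype m] [Fintype n]

theorem finrank_range_vecMulLinear [Field K] (M : Matrix m n K) :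
    Module.finrank K (LinearMap.range M.vecMulLinear) = M.rank := by
  rw [← mulVecLin_transpose, ← rank, rank_transpose]

theorem range_vecMulLinear_eq_ker_vecMulLinear [Fintype l] [Field K] {M : Matrix m n K}
    {L : Matrix n l K} (hML : M * L = 0) (hrank : Fintype.card n ≤ M.rank + L.rank) :
    LinearMap.range M.vecMulLinear = LinearMap.ker L.vecMulLinear := by
  have hle : LinearMap.range M.vecMulLinear ≤ LinearMap.ker L.vecMulLinear := by
    rintro _ ⟨u, rfl⟩
    rw [LinearMap.mem_ker, vecMulLinear_apply, vecMulLinear_apply, vecMul_vecMul, hML, vecMul_zero]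
  have hnullity := L.vecMulLinear.finrank_range_add_finrank_ker
  rw [finrank_range_vecMulLinear, Module.finrank_fintype_fun_eq_card] at hnullity
  refine Submodule.eq_of_le_of_finrank_le hle ?_
  rw [finrank_range_vecMulLinear]
  lia

theorem star_vecMul_of_isHermitian [NonUnitalSemiring K] [StarRing K] {M : Matrix n n K}
    (hM : M.IsHermitian) (v : n → K) : star v ᵥ* M = star (M *ᵥ v) := by
  rw [star_mulVec, hM.eq]

end LinearAlgebra

section Kalman

variable {l m n R : Type*} [Fintype n] [DecidableEq n]

/-- The Kalman controllability matrix `[B, AB, …, AᵏB]` of the pair `(A, B)`; the column index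
`(i, j)` stands for column `j` of the block `AⁱB`. -/
def kalmanMatrix [Semiring R] (A : Matrix n n R) (B : Matrix n m R) (k : ℕ) :
    Matrix n (Fin (k + 1) × m) R :=
  of fun i p => (A ^ (p.1 : ℕ) * B) i p.2

variable [Semiring R] {A : Matrix n n R} {B : Matrix n m R}

theorem vecMul_pow_of_vecMul_eq_smul {μ : R} {w : n → R} (hA : w ᵥ* A = μ • w) (i : ℕ) :
    w ᵥ* A ^ i = μ ^ i • w := by
  induction i with
  | zero => simp
  | succ i ih => rw [pow_succ, ← vecMul_vecMul, ih, smul_vecMul, hA, smul_smul, pow_succ]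

theorem vecMul_kalmanMatrix_eq_zero {μ : R} {w : n → R} (hA : w ᵥ* A = μ • w) (hB : w ᵥ* B = 0)
    (k : ℕ) : w ᵥ* kalmanMatrix A B k = 0 := by
  have hblock (i : ℕ) : w ᵥ* (A ^ i * B) = 0 := by
    rw [← vecMul_vecMul, vecMul_pow_of_vecMul_eq_smul hA, smul_vecMul, hB, smul_zero]
  ext p
  exact congrFun (hblock p.1) p.2

theorem mul_kalmanMatrix_eq_zero {M : Matrix l n R} (hA : M * A = 0) (hB : M * B = 0) (k : ℕ) :
    M * kalmanMatrix A B k = 0 := by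
  funext i
  rw [mul_apply_eq_vecMul]
  refine vecMul_kalmanMatrix_eq_zero (μ := 0) ?_ (congrFun hB i) k
  rw [zero_smul]
  exact congrFun hA i

end Kalman

section Hautus

variable {ι n K : Type*} [Fintype n] [DecidableEq n]

theorem eq_zero_of_vecMul_eq_smul_of_rank_kalmanMatrix [Field K] {k : ℕ} {P H : Matrix n n K}
    (hP : IsIdempotentElem P)
    (hrank : Fintype.card n ≤
      P.rank + (kalmanMatrix ((1 - P) * H * (1 - P)) ((1 - P) * H * P) k).rank)
    {μ : K} {w : n → K} (hwH : w ᵥ* H = μ • w) (hwP : w ᵥ* P = 0) : w = 0 := by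
  have hw : w ᵥ* (1 - P) = w := by rw [vecMul_sub, vecMul_one, hwP, sub_zero]
  have hwK : w ᵥ* kalmanMatrix ((1 - P) * H * (1 - P)) ((1 - P) * H * P) k = 0 := by
    apply vecMul_kalmanMatrix_eq_zero (μ := μ) <;>
      simp only [← vecMul_vecMul, hw, hwH, smul_vecMul, hwP, smul_zero]
  have hPK : P * kalmanMatrix ((1 - P) * H * (1 - P)) ((1 - P) * H * P) k = 0 := by
    apply mul_kalmanMatrix_eq_zero <;> simp only [← mul_assoc, hP.mul_one_sub_self, zero_mul]
  obtain ⟨u, rfl⟩ : w ∈ LinearMap.range P.vecMulLinear := by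
    rwa [range_vecMulLinear_eq_ker_vecMulLinear hPK hrank]
  rwa [vecMulLinear_apply, vecMul_vecMul, hP.eq] at hwP

theorem mulVec_eq_smul_of_sum_eq_one [Fintype ι] [Semiring K] {P : ι → Matrix n n K}
    (hP : ∑ i, P i = 1) {H : Matrix n n K} {j : ι} {μ : K} {v : n → K} (hv : P j *ᵥ v = v)
    (hdiag : (P j * H * P j) *ᵥ v = μ • v) (hoff : ∀ i, i ≠ j → (P i * H * P j) *ᵥ v = 0) :
    H *ᵥ v = μ • v :=
  calc
    H *ᵥ v = (∑ i, P i * H * P j) *ᵥ v := by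
      rw [← Finset.sum_mul, ← Finset.sum_mul, hP, one_mul, ← mulVec_mulVec, hv]
    _ = ∑ i, (P i * H * P j) *ᵥ v := sum_mulVec ..
    _ = (P j * H * P j) *ᵥ v := Fintype.sum_eq_single j hoff
    _ = μ • v := hdiag

theorem stmt18_general [Fintype ι] [Field K] [StarRing K] {k : ℕ} {P : ι → Matrix n n K}
    (hP : CompleteOrthogonalIdempotents P) {i₀ : ι} (hP₀ : (P i₀).IsHermitian)
    {H : Matrix n n K} (hH : H.IsHermitian)
    (hrank : Fintype.card n - (P i₀).rank ≤
      (kalmanMatrix ((1 - P i₀) * H * (1 - P i₀)) ((1 - P i₀) * H * P i₀) k).rank)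
    {j : ι} (hj : j ≠ i₀) {μ : K} {v : n → K} (hv : P j *ᵥ v = v)
    (hdiag : (P j * H * P j) *ᵥ v = μ • v) (hoff : ∀ i, i ≠ j → (P i * H * P j) *ᵥ v = 0) :
    v = 0 := by
  have hHv : H *ᵥ v = μ • v := mulVec_eq_smul_of_sum_eq_one hP.complete hv hdiag hoff
  have hP₀v : P i₀ *ᵥ v = 0 := by rw [← hv, mulVec_mulVec, hP.ortho hj.symm, zero_mulVec]
  have hstarH : star v ᵥ* H = star μ • star v := by
    rw [star_vecMul_of_isHermitian hH, hHv, star_smul]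
  have hstarP₀ : star v ᵥ* P i₀ = 0 := by
    rw [star_vecMul_of_isHermitian hP₀, hP₀v, star_zero]
  exact star_eq_zero.mp <| eq_zero_of_vecMul_eq_smul_of_rank_kalmanMatrix (hP.idem i₀)
    (tsub_le_iff_left.mp hrank) hstarH hstarP₀

end Hautus

/-- The Kalman-type condition A-ctrl implies the Hautus-type condition A6. -/
theorem stmt18 {N d n : ℕ} (P : Fin (d + 1) → Matrix (Fin N) (Fin N) ℂ)
    (hHerm : ∀ i, (P i).IsHermitian)
    (hIdem : ∀ i, P i * P i = P i)
    (hOrth : ∀ i j, i ≠ j → P i * P j = 0)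
    (hSum : ∑ i, P i = 1)
    (H₁ : Matrix (Fin N) (Fin N) ℂ) (hH₁ : H₁.IsHermitian)
    (r : ℕ) (hr : (P 0).rank = r)
    (A B : Matrix (Fin N) (Fin N) ℂ)
    (hA : A = (1 - P 0) * H₁ * (1 - P 0))
    (hB : B = (1 - P 0) * H₁ * P 0)
    (hrank : N - r ≤
      (Matrix.of fun (i : Fin N) (p : Fin (n + 1) × Fin N) =>
        (A ^ (p.1 : ℕ) * B) i p.2).rank) :
    ∀ j : Fin (d + 1), j ≠ 0 → ∀ (lam : ℂ) (v : Fin N → ℂ),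
      (P j).mulVec v = v →
      (P j * H₁ * P j).mulVec v = lam • v →
      (∀ i, i ≠ j → (P i * H₁ * P j).mulVec v = 0) →
      v = 0 := by
  subst hr hA hB
  exact fun j hj lam v => stmt18_general ⟨⟨hIdem, hOrth⟩, hSum⟩ (hHerm 0) hH₁
    (by rwa [Fintype.card_fin]) hj
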